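/- Let 𝒳 and 𝒲 be standard Borel spaces, R a probability measure on 𝒲, and f : 𝒳 × 𝒲 → 𝒳 measurable with t-step transition maps F_t. For t ≥ 1 and probability measures Φ, Ψ on 𝒳, define the minimum required conditional relative entropy supply J_t(Φ, Ψ) := inf { ∫_𝒳 D(κ(x) ‖ R^{⊗t}) dΦ(x) : κ a Markov kernel from 𝒳 to 𝒲^t with κ(x) ≪ R^{⊗t} for Φ-a.e. x and (Φ ⊗ κ) ∘ F_t⁻¹ = Ψ }, valued in [0,∞] with inf ∅ = ∞. Then for any 0 < s < t and any probability measures Φ, Ψ on 𝒳: J_t(Φ, Ψ) = inf_Θ ( J_s(Φ, Θ) + J_{t-s}(Θ, Ψ) ), where the infimum is taken over all probability measures Θ on 𝒳. -/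

import Mathlib

open MeasureTheory ProbabilityTheory
open scoped ENNReal ProbabilityTheory Classical

/-- Kullback-Leibler divergence `D(P ‖ Q)`, valued in `[0,∞]`.  For probability measures with
`P ≪ Q` it equals `∫ log (dP/dQ) dP`, computed here in the equivalent nonnegative form
`∫⁻ (φ log φ - φ + 1) dQ` where `φ = dP/dQ`; it is `∞` when `¬ P ≪ Q`. -/
noncomputable def klDiv {α : Type*} [MeasurableSpace α] (P Q : Measure α) : ℝ≥0∞ :=
  if P ≪ Q then
    ∫⁻ x, ENNReal.ofReal ((P.rnDeriv Q x).toReal * Real.log (P.rnDeriv Q x).toReal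
      - (P.rnDeriv Q x).toReal + 1) ∂Q
  else ∞

/-- The `t`-step state transition maps: `F 0 (x, _) = x` and
`F (k+1) (x, w₀, …, w_k) = f (F k (x, w₀, …, w_{k-1}), w_k)`. -/
def stateTrans {𝒳 𝒲 : Type*} (f : 𝒳 × 𝒲 → 𝒳) : (t : ℕ) → 𝒳 × (Fin t → 𝒲) → 𝒳
  | 0, p => p.1
  | t + 1, p => f (stateTrans f t (p.1, fun i => p.2 i.castSucc), p.2 (Fin.last t))

/-- The minimum required conditional relative entropy supply to drive the state distribution
from `Φ` to `Ψ` under the transition map `F : 𝒳 × 𝒱 → 𝒳` (for `J_t` take `𝒱 = 𝒲^t`,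
`F = F_t` and `Rt = R^{⊗t}`): the infimum over all Markov kernels `κ` with `κ x ≪ Rt` for
`Φ`-a.e. `x` and `(Φ ⊗ κ) ∘ F⁻¹ = Ψ` of `∫ D(κ(x) ‖ Rt) dΦ(x)`, with `inf ∅ = ∞`. -/
noncomputable def reqSupply {𝒳 𝒱 : Type*} [MeasurableSpace 𝒳] [MeasurableSpace 𝒱]
    (F : 𝒳 × 𝒱 → 𝒳) (Rt : Measure 𝒱) (Φ Ψ : Measure 𝒳) : ℝ≥0∞ :=
  ⨅ (κ : Kernel 𝒳 𝒱) (_ : IsMarkovKernel κ) (_ : ∀ᵐ x ∂Φ, κ x ≪ Rt)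
    (_ : (Φ ⊗ₘ κ).map F = Ψ), ∫⁻ x, klDiv (κ x) Rt ∂Φ


lemma klDiv_eq_mathlib {α : Type*} [MeasurableSpace α] (P Q : Measure α) [IsFiniteMeasure P]
    [IsFiniteMeasure Q] : klDiv P Q = InformationTheory.klDiv P Q := by
  rw [InformationTheory.klDiv_eq_lintegral_klFun, klDiv]
  congr 1
  refine lintegral_congr fun x => ?_
  rw [InformationTheory.klFun_apply]
  congr 1
  ring

section aux
variable {X V : Type*} [MeasurableSpace X] [MeasurableSpace V]
  [StandardBorelSpace V]

lemma compProd_eq_withDensity (Φ : Measure X) [IsProbabilityMeasure Φ] (R : Measure V)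
    [IsProbabilityMeasure R] (κ : Kernel X V) [IsMarkovKernel κ] (h : ∀ᵐ x ∂Φ, κ x ≪ R) :
    Φ ⊗ₘ κ = (Φ ⊗ₘ Kernel.const X R).withDensity
      (fun p => Kernel.rnDeriv κ (Kernel.const X R) p.1 p.2) := by
  have hm : Measurable (fun p : X × V => Kernel.rnDeriv κ (Kernel.const X R) p.1 p.2) :=
    Kernel.measurable_rnDeriv _ _
  ext s hs
  rw [withDensity_apply _ hs, Measure.compProd_apply hs, ← lintegral_indicator hs,
    Measure.lintegral_compProd (hm.indicator hs)]
  refine lintegral_congr_ae ?_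
  filter_upwards [h] with x hx
  have h1 := Kernel.withDensity_rnDeriv_eq (κ := κ) (η := Kernel.const X R) (a := x) (by simpa using hx)
  rw [← h1, Kernel.withDensity_apply' _ (Kernel.measurable_rnDeriv _ _),
    ← lintegral_indicator (measurable_prodMk_left hs)]
  rfl

lemma klDiv_ae_eq (Φ : Measure X) (R : Measure V)
    [IsProbabilityMeasure R] (κ : Kernel X V) [IsMarkovKernel κ] (h : ∀ᵐ x ∂Φ, κ x ≪ R) :
    (fun x => klDiv (κ x) R) =ᵐ[Φ] (fun x => lintegral R (fun y => ENNReal.ofReal (InformationTheory.klFun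
      ((Kernel.rnDeriv κ (Kernel.const X R) x y).toReal)))) := by
  filter_upwards [h] with x hx
  rw [klDiv_eq_mathlib, InformationTheory.klDiv_eq_lintegral_klFun_of_ac hx]
  have := Kernel.rnDeriv_eq_rnDeriv_measure (κ := κ) (η := Kernel.const X R) (a := x)
  rw [Kernel.const_apply] at this
  refine lintegral_congr_ae ?_
  filter_upwards [this] with y hy
  rw [hy]

lemma aemeasurable_klDiv (Φ : Measure X) (R : Measure V)
    [IsProbabilityMeasure R] (κ : Kernel X V) [IsMarkovKernel κ] (h : ∀ᵐ x ∂Φ, κ x ≪ R) :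
    AEMeasurable (fun x => klDiv (κ x) R) Φ := by
  refine AEMeasurable.congr (Measurable.aemeasurable ?_) (klDiv_ae_eq Φ R κ h).symm
  refine Measurable.lintegral_prod_right' (f := fun p : X × V =>
    ENNReal.ofReal (InformationTheory.klFun
      (Kernel.rnDeriv κ (Kernel.const X R) p.1 p.2).toReal)) ?_
  have hm : Measurable (fun p : X × V => Kernel.rnDeriv κ (Kernel.const X R) p.1 p.2) :=
    Kernel.measurable_rnDeriv _ _
  fun_prop

lemma lintegral_klDiv (Φ : Measure X) [IsProbabilityMeasure Φ] (R : Measure V)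
    [IsProbabilityMeasure R] (κ : Kernel X V) [IsMarkovKernel κ] (h : ∀ᵐ x ∂Φ, κ x ≪ R) :
    ∫⁻ x, klDiv (κ x) R ∂Φ
      = InformationTheory.klDiv (Φ ⊗ₘ κ) (Φ ⊗ₘ Kernel.const X R) := by
  have hm : Measurable (fun p : X × V => Kernel.rnDeriv κ (Kernel.const X R) p.1 p.2) :=
    Kernel.measurable_rnDeriv _ _
  have hac : Φ ⊗ₘ κ ≪ Φ ⊗ₘ Kernel.const X R := by
    rw [compProd_eq_withDensity Φ R κ h]; exact withDensity_absolutelyContinuous _ _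
  rw [InformationTheory.klDiv_eq_lintegral_klFun_of_ac hac, lintegral_congr_ae (klDiv_ae_eq Φ R κ h)]
  have hrn : (Φ ⊗ₘ κ).rnDeriv (Φ ⊗ₘ Kernel.const X R) =ᵐ[Φ ⊗ₘ Kernel.const X R]
      (fun p => Kernel.rnDeriv κ (Kernel.const X R) p.1 p.2) := by
    conv_lhs => rw [compProd_eq_withDensity Φ R κ h]
    exact Measure.rnDeriv_withDensity _ hm
  have : ∫⁻ p, ENNReal.ofReal (InformationTheory.klFun
        ((Φ ⊗ₘ κ).rnDeriv (Φ ⊗ₘ Kernel.const X R) p).toReal) ∂(Φ ⊗ₘ Kernel.const X R)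
      = ∫⁻ p, ENNReal.ofReal (InformationTheory.klFun
        (Kernel.rnDeriv κ (Kernel.const X R) p.1 p.2).toReal) ∂(Φ ⊗ₘ Kernel.const X R) := by
    refine lintegral_congr_ae ?_
    filter_upwards [hrn] with p hp
    rw [hp]
  rw [this, Measure.lintegral_compProd (by fun_prop)]
  simp

lemma reqSupply_le (F : X × V → X) (R : Measure V) [IsProbabilityMeasure R]
    (Φ Ψ : Measure X) [IsProbabilityMeasure Φ] (π : Measure (X × V)) [IsProbabilityMeasure π]
    (h1 : π.fst = Φ) (h2 : π.map F = Ψ) :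
    reqSupply F R Φ Ψ ≤ InformationTheory.klDiv π (Φ.prod R) := by
  by_cases hac : π ≪ Φ.prod R
  swap
  · simp [InformationTheory.klDiv_of_not_ac hac]
  have : Nonempty V := (nonempty_of_isProbabilityMeasure R)
  have hd : Φ ⊗ₘ π.condKernel = π := by
    rw [← h1]; exact π.disintegrate π.condKernel
  rw [← Measure.compProd_const] at hac ⊢
  have hae : ∀ᵐ x ∂Φ, π.condKernel x ≪ R := by
    rw [← hd] at hac
    have := Measure.absolutelyContinuous_compProd_right_iff.mp hac
    simpa using this
  refine (iInf_le_of_le π.condKernel <| iInf_le_of_le inferInstance <| iInf_le_of_le hae <|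
    iInf_le_of_le (by rw [hd, h2]) ?_)
  rw [lintegral_klDiv Φ R _ hae, hd]

end aux

section abs
set_option linter.unusedSectionVars false
variable {X V V1 V2 : Type*} [MeasurableSpace X] [MeasurableSpace V] [MeasurableSpace V1]
  [MeasurableSpace V2] [StandardBorelSpace V] [StandardBorelSpace V1] [StandardBorelSpace V2]

/-- Reassociation equivalence. -/
def bigEquiv (X : Type*) [MeasurableSpace X] (ε : V1 × V2 ≃ᵐ V) : (X × V1) × V2 ≃ᵐ X × V :=
  MeasurableEquiv.prodAssoc.trans (MeasurableEquiv.prodCongr (MeasurableEquiv.refl X) ε)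

lemma bigEquiv_apply (ε : V1 × V2 ≃ᵐ V) (p : (X × V1) × V2) :
    bigEquiv X ε p = (p.1.1, ε (p.1.2, p.2)) := rfl

lemma map_bigEquiv (ε : V1 × V2 ≃ᵐ V) (R : Measure V) (R1 : Measure V1) (R2 : Measure V2)
    [IsProbabilityMeasure R] [IsProbabilityMeasure R1] [IsProbabilityMeasure R2]
    (hR : (R1.prod R2).map ε = R) (Φ : Measure X) [IsProbabilityMeasure Φ] :
    ((Φ.prod R1).prod R2).map (bigEquiv X ε) = Φ.prod R := by
  have h1 : ((Φ.prod R1).prod R2).map MeasurableEquiv.prodAssoc = Φ.prod (R1.prod R2) :=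
    (measurePreserving_prodAssoc Φ R1 R2).map_eq
  have : (bigEquiv X ε : (X × V1) × V2 → X × V) =
    (Prod.map id ε) ∘ (MeasurableEquiv.prodAssoc : (X × V1) × V2 ≃ᵐ X × V1 × V2) := rfl
  rw [this, ← Measure.map_map (by fun_prop) (by fun_prop), h1,
    ← Measure.map_prod_map _ _ measurable_id ε.measurable, hR, Measure.map_id]

lemma klDiv_map_equiv {A B : Type*} [MeasurableSpace A] [MeasurableSpace B] (e : A ≃ᵐ B)
    (μ ν : Measure A) [IsFiniteMeasure μ] [IsFiniteMeasure ν] :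
    InformationTheory.klDiv (μ.map e) (ν.map e) = InformationTheory.klDiv μ ν := by
  refine le_antisymm (InformationTheory.klDiv_map_le _ _ e.measurable) ?_
  have := InformationTheory.klDiv_map_le (μ.map e) (ν.map e) e.symm.measurable
  simpa [Measure.map_map e.symm.measurable e.measurable] using this

theorem abs_bellman (ε : V1 × V2 ≃ᵐ V) (R : Measure V) (R1 : Measure V1) (R2 : Measure V2)
    [IsProbabilityMeasure R] [IsProbabilityMeasure R1] [IsProbabilityMeasure R2]
    (hR : (R1.prod R2).map ε = R)
    (F : X × V → X) (F1 : X × V1 → X) (F2 : X × V2 → X)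
    (hF : Measurable F) (hF1 : Measurable F1) (hF2 : Measurable F2)
    (hFF : ∀ x a b, F (x, ε (a, b)) = F2 (F1 (x, a), b))
    (Φ Ψ : Measure X) [IsProbabilityMeasure Φ] [IsProbabilityMeasure Ψ] :
    reqSupply F R Φ Ψ = ⨅ (Θ : Measure X) (_ : IsProbabilityMeasure Θ),
      reqSupply F1 R1 Φ Θ + reqSupply F2 R2 Θ Ψ := by
  have hcomp : F ∘ bigEquiv X ε = F2 ∘ (Prod.map F1 id) := by
    funext p
    simp [bigEquiv_apply, hFF]
    rfl
  apply le_antisymm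
  · refine le_iInf₂ fun Θ hΘ => ?_
    conv_rhs => rw [reqSupply, reqSupply]
    simp only [ENNReal.iInf_add, ENNReal.add_iInf]
    refine le_iInf fun κ2 => le_iInf fun hκ2 => le_iInf fun hac2 => le_iInf fun hm2 =>
      le_iInf fun κ1 => le_iInf fun hκ1 => le_iInf fun hac1 => le_iInf fun hm1 => ?_
    set π1 := Φ ⊗ₘ κ1 with hπ1
    set κ := κ2.comap F1 hF1 with hκ
    set π := π1 ⊗ₘ κ with hπ
    have hmap : π.map (Prod.map F1 id) = Θ ⊗ₘ κ2 := by
      ext s hs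
      rw [Measure.map_apply (by fun_prop) hs, hπ, Measure.compProd_apply (by measurability),
        Measure.compProd_apply hs, ← hm1,
        lintegral_map (Kernel.measurable_kernel_prodMk_left hs) hF1]
      rfl
    have hac : ∀ᵐ p ∂π1, κ p ≪ R2 := by
      rw [← hm1] at hac2
      exact ae_of_ae_map hF1.aemeasurable hac2
    have hpm : IsProbabilityMeasure (π.map (bigEquiv X ε)) :=
      Measure.isProbabilityMeasure_map (bigEquiv X ε).measurable.aemeasurable
    have hle := reqSupply_le F R Φ Ψ (π.map (bigEquiv X ε)) ?_ ?_
    · refine hle.trans (le_of_eq ?_)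
      rw [← map_bigEquiv ε R R1 R2 hR Φ, klDiv_map_equiv, ← Measure.compProd_const (ν := R2),
        hπ, InformationTheory.klDiv_compProd_eq_add, ← lintegral_klDiv π1 R2 κ hac,
        lintegral_klDiv Φ R1 κ1 hac1, Measure.compProd_const]
      congr 1
      have hae := aemeasurable_klDiv Θ R2 κ2 hac2
      rw [← hm1] at hae ⊢
      rw [lintegral_map' hae hF1.aemeasurable]
      rfl
    · rw [Measure.fst, Measure.map_map measurable_fst (bigEquiv X ε).measurable]
      have : Prod.fst ∘ bigEquiv X ε = Prod.fst ∘ Prod.fst := rfl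
      rw [this, ← Measure.map_map measurable_fst measurable_fst]
      change (π.fst).fst = Φ
      rw [hπ, Measure.fst_compProd, hπ1, Measure.fst_compProd]
    · rw [Measure.map_map hF (bigEquiv X ε).measurable, hcomp,
        ← Measure.map_map hF2 (by fun_prop), hmap, hm2]
  · rw [reqSupply]
    refine le_iInf fun κ0 => le_iInf fun hκ0 => le_iInf fun hac0 => le_iInf fun hm0 => ?_
    rw [lintegral_klDiv Φ R κ0 hac0]
    have : Nonempty V2 := (nonempty_of_isProbabilityMeasure R2)
    set π := (Φ ⊗ₘ κ0).map (bigEquiv X ε).symm with hπ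
    have hπp : IsProbabilityMeasure π :=
      Measure.isProbabilityMeasure_map (bigEquiv X ε).symm.measurable.aemeasurable
    have hback : π.map (bigEquiv X ε) = Φ ⊗ₘ κ0 := by
      rw [hπ, Measure.map_map (bigEquiv X ε).measurable (bigEquiv X ε).symm.measurable]
      simp
    have hp1 : IsProbabilityMeasure (π.fst.map F1) :=
      Measure.isProbabilityMeasure_map hF1.aemeasurable
    have hp2 : IsProbabilityMeasure (π.map (Prod.map F1 id)) :=
      Measure.isProbabilityMeasure_map (by fun_prop)
    refine iInf₂_le_of_le (π.fst.map F1) hp1 ?_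
    have hfst : π.fst.fst = Φ := by
      have h := Measure.fst_compProd Φ κ0
      rw [← hback, Measure.fst, Measure.map_map measurable_fst (bigEquiv X ε).measurable] at h
      rw [Measure.fst, Measure.fst, Measure.map_map measurable_fst measurable_fst]
      exact h
    have hJ1 := reqSupply_le F1 R1 Φ (π.fst.map F1) π.fst hfst rfl
    have hJ2 := reqSupply_le F2 R2 (π.fst.map F1) Ψ (π.map (Prod.map F1 id)) ?_ ?_
    · refine (add_le_add hJ1 hJ2).trans ?_
      have e1 : InformationTheory.klDiv (Φ ⊗ₘ κ0) (Φ ⊗ₘ Kernel.const X R)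
          = InformationTheory.klDiv π ((Φ.prod R1) ⊗ₘ Kernel.const _ R2) := by
        rw [Measure.compProd_const, Measure.compProd_const, ← hback,
          ← map_bigEquiv ε R R1 R2 hR Φ, klDiv_map_equiv]
      have hd : π.fst ⊗ₘ π.condKernel = π := π.disintegrate π.condKernel
      have e2 := InformationTheory.klDiv_compProd_eq_add π.fst (Φ.prod R1) π.condKernel
        (Kernel.const _ R2)
      rw [hd] at e2
      rw [e1, e2]
      refine add_le_add le_rfl ?_
      have := InformationTheory.klDiv_map_le π (π.fst ⊗ₘ Kernel.const _ R2)
        (g := Prod.map F1 id) (by fun_prop)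
      rw [Measure.compProd_const, ← Measure.map_prod_map _ _ hF1 measurable_id,
        Measure.map_id] at this
      rw [Measure.compProd_const]
      exact this
    · rw [Measure.fst, Measure.map_map measurable_fst (by fun_prop), Measure.fst,
        Measure.map_map hF1 measurable_fst]
      rfl
    · rw [Measure.map_map hF2 (by fun_prop), ← hcomp,
        ← Measure.map_map hF (bigEquiv X ε).measurable, hback, hm0]

end abs

lemma measurable_stateTrans {X W : Type*} [MeasurableSpace X] [MeasurableSpace W]
    (f : X × W → X) (hf : Measurable f) : ∀ t, Measurable (stateTrans f t)
  | 0 => measurable_fst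
  | t + 1 => by
    have ih := measurable_stateTrans f hf t
    change Measurable (fun p : X × (Fin (t + 1) → W) =>
      f (stateTrans f t (p.1, fun i => p.2 i.castSucc), p.2 (Fin.last t)))
    fun_prop

lemma stateTrans_append {X W : Type*} (f : X × W → X) (s : ℕ) (x : X) (a : Fin s → W) :
    ∀ (r : ℕ) (b : Fin r → W),
    stateTrans f (s + r) (x, Fin.append a b) = stateTrans f r (stateTrans f s (x, a), b)
  | 0, b => by
    simp only [stateTrans]
    congr 2
    funext i
    exact Fin.append_left a b i
  | r + 1, b => by
    have ih := stateTrans_append f s x a r (fun i => b i.castSucc)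
    change f (stateTrans f (s + r) (x, fun i => Fin.append a b i.castSucc),
      Fin.append a b (Fin.last (s + r))) = _
    have h1 : (fun i : Fin (s + r) => Fin.append a b i.castSucc)
        = Fin.append a (fun i => b i.castSucc) := by
      funext i
      refine Fin.addCases (fun j => ?_) (fun j => ?_) i
      · rw [Fin.append_left]
        exact Fin.append_left a b j
      · rw [Fin.append_right]
        exact Fin.append_right a b j.castSucc
    have h2 : Fin.append a b (Fin.last (s + r)) = b (Fin.last r) :=
      Fin.append_right a b (Fin.last r)
    rw [h1, h2, ih]
    rfl

/-- Concatenation of noise sequences. -/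
def appendMEquiv (W : Type*) [MeasurableSpace W] (s r : ℕ) :
    (Fin s → W) × (Fin r → W) ≃ᵐ (Fin (s + r) → W) where
  toEquiv := Fin.appendEquiv s r
  measurable_toFun := by
    refine measurable_pi_lambda _ fun i => ?_
    refine Fin.addCases (fun j => ?_) (fun j => ?_) i
    · simp only [Fin.appendEquiv, Equiv.coe_fn_mk, Fin.append_left]
      fun_prop
    · simp only [Fin.appendEquiv, Equiv.coe_fn_mk, Fin.append_right]
      fun_prop
  measurable_invFun := by
    simp only [Fin.appendEquiv, Equiv.coe_fn_symm_mk]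
    fun_prop

lemma map_appendMEquiv {W : Type*} [MeasurableSpace W] (R : Measure W) [IsProbabilityMeasure R]
    (s r : ℕ) :
    ((Measure.pi fun _ : Fin s => R).prod (Measure.pi fun _ : Fin r => R)).map
      (appendMEquiv W s r) = Measure.pi fun _ : Fin (s + r) => R := by
  symm
  refine Measure.pi_eq fun S hS => ?_
  rw [MeasurableEquiv.map_apply]
  have : (appendMEquiv W s r) ⁻¹' (Set.univ.pi S)
      = (Set.univ.pi fun i => S (Fin.castAdd r i)) ×ˢ (Set.univ.pi fun i => S (Fin.natAdd s i)) := by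
    ext ⟨a, b⟩
    change (∀ i, _ → Fin.append a b i ∈ S i) ↔ _
    simp [Fin.forall_fin_add, Set.mem_pi]
  rw [this, Measure.prod_prod, Measure.pi_pi, Measure.pi_pi, Fin.prod_univ_add]

/-- Dynamic programming for the minimum required conditional relative entropy supply:
`J_t(Φ, Ψ) = inf_Θ (J_s(Φ, Θ) + J_{t-s}(Θ, Ψ))`, the infimum over all intermediate
probability distributions `Θ`. -/
theorem bellman_composition
    {𝒳 𝒲 : Type*} [MeasurableSpace 𝒳] [StandardBorelSpace 𝒳]
    [MeasurableSpace 𝒲] [StandardBorelSpace 𝒲]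
    (R : Measure 𝒲) [IsProbabilityMeasure R]
    (f : 𝒳 × 𝒲 → 𝒳) (hf : Measurable f)
    (s t : ℕ) (hs : 0 < s) (hst : s < t)
    (Φ Ψ : Measure 𝒳) [IsProbabilityMeasure Φ] [IsProbabilityMeasure Ψ] :
    reqSupply (stateTrans f t) (Measure.pi fun _ : Fin t => R) Φ Ψ
      = ⨅ (Θ : Measure 𝒳) (_ : IsProbabilityMeasure Θ),
          reqSupply (stateTrans f s) (Measure.pi fun _ : Fin s => R) Φ Θ
            + reqSupply (stateTrans f (t - s)) (Measure.pi fun _ : Fin (t - s) => R) Θ Ψ := by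
  obtain ⟨r, rfl⟩ := Nat.exists_eq_add_of_le hst.le
  rw [Nat.add_sub_cancel_left]
  exact abs_bellman (appendMEquiv 𝒲 s r) _ _ _ (map_appendMEquiv R s r) _ _ _
    (measurable_stateTrans f hf _) (measurable_stateTrans f hf _) (measurable_stateTrans f hf _)
    (fun x a b => stateTrans_append f s x a r b) Φ Ψ
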